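/- Let q be a real number with 0 < q and q ≠ 1, let h₁, l₁, l₂, α₁, λ be real numbers and t₁, t₂ nonzero reals. Assume λ + α₁ = -N for some positive integer N (so (q^{λ+α₁};q)_n = 0 for all n > N and the series below is a finite sum), and assume q^{h₁-l₂+n}·t₁/t₂ ≠ 1 for all integers 1 ≤ n ≤ N and q^{h₁-l₁+k} ≠ 1 for all integers 1 ≤ k ≤ N. Then the function g(x) = x^{-α₁} · Σ_{n=0}^{N} (q^{h₁+1/2}t₁/x;q)_n · [(q^{λ+α₁};q)_n / (q^{h₁-l₂+1}·t₁/t₂;q)_n] · q^n · Σ_{k=0}^{n} q^{k(k+1)/2} · (-q^{h₁-l₂}·t₁/t₂)^k / ((q^{h₁-l₁+1};q)_k (q;q)_k (q;q)_{n-k}) satisfies the variant of the confluent q-hypergeometric equation of type (2,1) for all x > 0. -/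

import Mathlib

/-- The finite q-shifted factorial `(a;q)_n = ∏_{i=0}^{n-1} (1 - a q^i)`. -/
noncomputable def qPoch (q a : ℝ) (n : ℕ) : ℝ :=
  ∏ i ∈ Finset.range n, (1 - a * q ^ i)

/-- The variant of the confluent q-hypergeometric equation of type (2,1) (for `x > 0`). -/
def confEq21 (q h₁ l₁ l₂ α₁ lam t₁ t₂ : ℝ) (g : ℝ → ℝ) : Prop :=
  ∀ x : ℝ, 0 < x →
    (x - q ^ (l₁ - 1/2) * t₁) * (x - q ^ (l₂ - 1/2) * t₂) * g (q * x)
    - q ^ (-h₁ + l₁ + l₂ + 2 * lam - 1/2) * t₂ * (x - q ^ (h₁ + 1/2) * t₁) * g (x / q)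
    - (q ^ (-α₁) * x ^ 2
        - q ^ (l₁ + l₂ + lam - 1/2) * (q ^ (-l₂) * t₁ + (q ^ (-h₁) + q ^ (-l₁)) * t₂) * x
        + q ^ (l₁ + l₂ + lam) * (1 + q⁻¹) * t₁ * t₂) * g x = 0

/-!
In the variable `y = q ^ (h₁ + 1/2) * t₁ / x`, and after stripping off `x ^ (-α₁)`, the equation is
`L f = 0` for a `q`-difference operator `L` that is tridiagonal on the `q`-shifted factorials:
`L` maps `(y;q)_n` to `y` times a combination of `(y;q)_{n+1}`, `(y;q)_n` and `(y;q)_{n-1}`. So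
`∑ a_n (y;q)_n` is a solution as soon as `a_n` satisfies a three-term recurrence, and the sum may
stop at `N` when `A = q ^ (-N)` kills the boundary terms.

With `a_n = (A;q)_n / (qb;q)_n * q ^ n * S_n` that recurrence is one for the inner sums `S_n`. They
are the coefficients of a product `J(z) E(z)`, where `E(qz) = (1 - z) E(z)` is Euler's
`q`-exponential and `J` is a `₁φ₁` series, which obeys a second-order `q`-difference equation.
Multiplying by `E` turns that equation into one for `J E`, and comparing coefficients gives the
recurrence. As the denominators `1 - c q ^ k` are nonzero only for `k ≤ N`, the `q`-difference
equations are taken modulo `z ^ (N + 1)`.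
-/

section qProduct

lemma qPoch_zero (q a : ℝ) : qPoch q a 0 = 1 :=
  Finset.prod_range_zero _

lemma qPoch_succ (q a : ℝ) (n : ℕ) : qPoch q a (n + 1) = qPoch q a n * (1 - a * q ^ n) :=
  Finset.prod_range_succ _ n

lemma qPoch_succ' (q a : ℝ) (n : ℕ) : qPoch q a (n + 1) = (1 - a) * qPoch q (q * a) n := by
  rw [qPoch, Finset.prod_range_succ', pow_zero, mul_one, mul_comm, qPoch]
  congr! 2 with i
  ring

lemma qPoch_div_self_succ {q : ℝ} (hq : q ≠ 0) (a : ℝ) (n : ℕ) :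
    qPoch q (a / q) (n + 1) = (1 - a / q) * qPoch q a n := by
  rw [qPoch_succ', mul_div_cancel₀ a hq]

lemma one_sub_mul_qPoch_mul_self_succ (q a : ℝ) (n : ℕ) :
    (1 - a) * qPoch q (q * a) (n + 1) = qPoch q a n * (1 - a * q ^ n) * (1 - a * q ^ (n + 1)) := by
  rw [← qPoch_succ', qPoch_succ, qPoch_succ]

end qProduct

section qDifference

open PowerSeries

theorem X_pow_dvd_qDifference_mul {R : Type*} [CommRing R] {q b c : R} {N : ℕ} {E J : R⟦X⟧}
    (hE : rescale q E = (1 - X) * E)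
    (hJ : X ^ N ∣ J - (1 + C c) * rescale q J + C c * rescale q (rescale q J)
      + C (b * q) * (X * rescale q J)) :
    X ^ N ∣ (1 - X) * ((1 - C q * X) * (J * E)) - (1 + C c) * ((1 - C q * X) * rescale q (J * E))
      + C c * rescale q (rescale q (J * E))
      + C (b * q) * (X * ((1 - C q * X) * rescale q (J * E))) := by
  convert hJ.mul_left ((1 - X) * ((1 - C q * X) * E)) using 1
  simp only [map_mul, map_sub, map_one, rescale_X, hE]
  ring

theorem coeff_recurrence_of_X_pow_dvd {R : Type*} [CommRing R] {q b c : R} {N : ℕ} {S : R⟦X⟧}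
    (hS : X ^ (N + 1) ∣ (1 - X) * ((1 - C q * X) * S) - (1 + C c) * ((1 - C q * X) * rescale q S)
      + C c * rescale q (rescale q S) + C (b * q) * (X * ((1 - C q * X) * rescale q S)))
    {n : ℕ} (hn : n < N) :
    (1 - q ^ (n + 1)) * (1 - c * q ^ (n + 1)) * coeff (n + 1) S
      = (1 + q - (1 + b + c) * q ^ (n + 1)) * coeff n S
        - q * (1 - b * q ^ n) * coeff n (X * S) := by
  have h := X_pow_dvd_iff.1 hS (n + 1) (by omega)
  cases n <;>
  · simp only [sub_mul, add_mul, one_mul, mul_assoc, map_add, map_sub, coeff_C_mul, coeff_rescale,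
      coeff_succ_X_mul, coeff_zero_X_mul] at h ⊢
    linear_combination h

/-- Euler's `q`-exponential series `∑ zⁿ / (q;q)_n`, i.e. `1 / (z;q)_∞` as a formal series. -/
noncomputable def qExpSeries (q : ℝ) : ℝ⟦X⟧ :=
  mk fun n => (qPoch q q n)⁻¹

/-- The basic hypergeometric series `₁φ₁(0; qc; q, qbz)` (Hahn–Exton `q`-Bessel type) as a formal
series in `z`; its `k`-th coefficient is meaningful as long as `c q^i ≠ 1` for `1 ≤ i ≤ k`. -/
noncomputable def phi11Series (q b c : ℝ) : ℝ⟦X⟧ :=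
  mk fun k => q ^ (k + 1).choose 2 * (-b) ^ k / (qPoch q (q * c) k * qPoch q q k)

lemma rescale_qExpSeries {q : ℝ} (hq : ∀ n : ℕ, q ^ (n + 1) ≠ 1) :
    rescale q (qExpSeries q) = (1 - X) * qExpSeries q := by
  ext n
  rcases n with _ | n
  · simp [sub_mul]
  · have hn : 1 - q * q ^ n ≠ 0 := by
      rw [← pow_succ']
      exact sub_ne_zero.2 (hq n).symm
    simp only [qExpSeries, sub_mul, one_mul, map_sub, coeff_rescale, coeff_succ_X_mul, coeff_mk,
      qPoch_succ, mul_inv, pow_succ']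
    linear_combination -(qPoch q q n)⁻¹ * mul_inv_cancel₀ hn

lemma coeff_succ_phi11Series {q b c : ℝ} {k : ℕ} (hq : q ^ (k + 1) ≠ 1)
    (hc : c * q ^ (k + 1) ≠ 1) :
    (1 - q ^ (k + 1)) * (1 - c * q ^ (k + 1)) * coeff (k + 1) (phi11Series q b c)
      = -(b * q ^ (k + 1)) * coeff k (phi11Series q b c) := by
  have hden : qPoch q (q * c) (k + 1) * qPoch q q (k + 1)
      = (1 - q ^ (k + 1)) * (1 - c * q ^ (k + 1)) * (qPoch q (q * c) k * qPoch q q k) := by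
    rw [qPoch_succ, qPoch_succ]
    ring
  have hne : (1 - q ^ (k + 1)) * (1 - c * q ^ (k + 1)) ≠ 0 :=
    mul_ne_zero (sub_ne_zero.2 hq.symm) (sub_ne_zero.2 hc.symm)
  have hchoose : (k + 1 + 1).choose 2 = (k + 1) + (k + 1).choose 2 := by
    rw [Nat.choose_succ_succ', Nat.choose_one_right]
  rw [phi11Series, coeff_mk, coeff_mk, hchoose, hden, ← mul_div_assoc, mul_div_mul_left _ _ hne]
  ring

lemma coeff_phi11Series_mul_qExpSeries (q b c : ℝ) (n : ℕ) :
    coeff n (phi11Series q b c * qExpSeries q)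
      = ∑ k ∈ Finset.range (n + 1), q ^ ((k : ℝ) * ((k : ℝ) + 1) / 2) * (-b) ^ k
          / (qPoch q (q * c) k * qPoch q q k * qPoch q q (n - k)) := by
  rw [coeff_mul, Finset.Nat.sum_antidiagonal_eq_sum_range_succ_mk]
  refine Finset.sum_congr rfl fun k _ => ?_
  have hexp : (k : ℝ) * ((k : ℝ) + 1) / 2 = ((k + 1).choose 2 : ℕ) := by
    rw [Nat.cast_choose_two]
    push_cast
    ring
  rw [phi11Series, qExpSeries, coeff_mk, coeff_mk, hexp,
    Real.rpow_natCast, ← div_eq_mul_inv, div_div]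

lemma X_pow_dvd_qDifference_phi11Series {q b c : ℝ} {N : ℕ} (hq : ∀ n : ℕ, q ^ (n + 1) ≠ 1)
    (hc : ∀ n < N, c * q ^ (n + 1) ≠ 1) :
    X ^ (N + 1) ∣ phi11Series q b c - (1 + C c) * rescale q (phi11Series q b c)
      + C c * rescale q (rescale q (phi11Series q b c))
      + C (b * q) * (X * rescale q (phi11Series q b c)) := by
  refine X_pow_dvd_iff.2 fun n hn => ?_
  rcases n with _ | n
  · simp only [add_mul, one_mul, map_add, map_sub, coeff_C_mul, coeff_rescale, coeff_zero_X_mul]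
    ring
  · simp only [add_mul, one_mul, map_add, map_sub, coeff_C_mul, coeff_rescale, coeff_succ_X_mul]
    linear_combination coeff_succ_phi11Series (b := b) (hq n) (hc n (by omega))

theorem coeff_phi11Series_mul_qExpSeries_recurrence {q b c : ℝ} {N : ℕ}
    (hq : ∀ n : ℕ, q ^ (n + 1) ≠ 1) (hc : ∀ n < N, c * q ^ (n + 1) ≠ 1) {n : ℕ} (hn : n < N) :
    (1 - q ^ (n + 1)) * (1 - c * q ^ (n + 1)) * coeff (n + 1) (phi11Series q b c * qExpSeries q)
      = (1 + q - (1 + b + c) * q ^ (n + 1)) * coeff n (phi11Series q b c * qExpSeries q)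
        - q * (1 - b * q ^ n) * coeff n (X * (phi11Series q b c * qExpSeries q)) :=
  coeff_recurrence_of_X_pow_dvd
    (X_pow_dvd_qDifference_mul (rescale_qExpSeries hq) (X_pow_dvd_qDifference_phi11Series hq hc)) hn

end qDifference

section Operator

/-- The difference operator of the equation of type (2,1), normalised: the equation for
`g x = x ^ (-α₁) * f y` in the variable `y = q ^ (h₁ + 1/2) * t₁ / x` is `confOp q A b c f y = 0`
with `A = q ^ (lam + α₁)`, `b = q ^ (h₁ - l₂) * t₁ / t₂` and `c = q ^ (h₁ - l₁)`. -/
noncomputable def confOp (q A b c : ℝ) (f : ℝ → ℝ) (y : ℝ) : ℝ :=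
  (q * c - y) * (q * b - y) * f (y / q) - A ^ 2 * q * y * (1 - y) * f (q * y)
    - (q ^ 2 * b * c - A * q * (1 + b + c) * y + A * (1 + q) * y ^ 2) * f y

/-- The coefficient of `(y;q)_{n+1}` in `y⁻¹` times the image of `(y;q)_n` under `confOp`. -/
noncomputable def confOpUp (q A : ℝ) (n : ℕ) : ℝ :=
  -((1 - A * q ^ n) * (1 - A * q ^ (n + 1)) / (q ^ n) ^ 2)

/-- The coefficient of `(y;q)_n` in `y⁻¹` times the image of `(y;q)_n` under `confOp`. -/
noncomputable def confOpDiag (q A b c : ℝ) (n : ℕ) : ℝ :=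
  (1 - A * q ^ n) * (1 + q - (1 + b + c) * q ^ (n + 1)) / (q ^ n) ^ 2

/-- The coefficient of `(y;q)_{n-1}` in `y⁻¹` times the image of `(y;q)_n` under `confOp`. -/
noncomputable def confOpDown (q b c : ℝ) (n : ℕ) : ℝ :=
  -(q * (1 - q ^ n) * (1 - b * q ^ n) * (1 - c * q ^ n) / (q ^ n) ^ 2)

lemma confOp_sum (q A b c : ℝ) {ι : Type*} (s : Finset ι) (a : ι → ℝ) (f : ι → ℝ → ℝ) (y : ℝ) :
    confOp q A b c (fun z => ∑ i ∈ s, a i * f i z) y = ∑ i ∈ s, a i * confOp q A b c (f i) y := by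
  simp only [confOp, Finset.mul_sum, ← Finset.sum_sub_distrib]
  exact Finset.sum_congr rfl fun i _ => by ring

theorem confOp_qPoch {q : ℝ} (hq : q ≠ 0) (A b c : ℝ) (n : ℕ) (y : ℝ) :
    confOp q A b c (fun z => qPoch q z n) y
      = y * (confOpUp q A n * qPoch q y (n + 1) + confOpDiag q A b c n * qPoch q y n
        + confOpDown q b c n * qPoch q y (n - 1)) := by
  rcases n with _ | n
  · simp only [confOp, confOpUp, confOpDiag, confOpDown, qPoch_succ, qPoch_zero]
    ring
  · have hqn : q ^ n ≠ 0 := pow_ne_zero n hq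
    simp only [confOp]
    rw [mul_assoc _ (1 - y), one_sub_mul_qPoch_mul_self_succ, qPoch_div_self_succ hq]
    simp only [confOpUp, confOpDiag, confOpDown, qPoch_succ, Nat.add_sub_cancel, pow_succ]
    field_simp
    ring

lemma sum_range_succ_tridiagonal {R : Type*} [CommRing R] {a up diag down : ℕ → R} {M : ℕ}
    (φ : ℕ → R) (hdown : down 0 = 0) (hzero : diag 0 * a 0 + down 1 * a 1 = 0)
    (hrec : ∀ n < M, up n * a n + diag (n + 1) * a (n + 1) + down (n + 2) * a (n + 2) = 0) :
    ∑ n ∈ Finset.range (M + 1), a n * (up n * φ (n + 1) + diag n * φ n + down n * φ (n - 1))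
      = up M * a M * φ (M + 1) - down (M + 1) * a (M + 1) * φ M := by
  induction M with
  | zero =>
    rw [zero_add, Finset.sum_range_one, hdown]
    linear_combination φ 0 * hzero
  | succ M ih =>
    rw [Finset.sum_range_succ, ih fun n hn => hrec n (hn.trans M.lt_succ_self),
      Nat.add_sub_cancel]
    linear_combination φ (M + 1) * hrec M M.lt_succ_self

end Operator

section Solution

open PowerSeries

/-- The coefficient of `(y;q)_n` in the solution `confSum`. -/
noncomputable def confCoeff (q A b c : ℝ) (n : ℕ) : ℝ :=
  qPoch q A n / qPoch q (q * b) n * q ^ n * coeff n (phi11Series q b c * qExpSeries q)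

/-- The terminating solution of `confOp q A b c f = 0` for `A = q ^ (-N)`, as a function of `y`. -/
noncomputable def confSum (q A b c : ℝ) (N : ℕ) (y : ℝ) : ℝ :=
  ∑ n ∈ Finset.range (N + 1), confCoeff q A b c n * qPoch q y n

lemma confSum_eq_sum_range (q A b c : ℝ) (N : ℕ) (y : ℝ) :
    confSum q A b c N y
      = ∑ n ∈ Finset.range (N + 1), qPoch q y n * (qPoch q A n / qPoch q (q * b) n) * q ^ n
        * ∑ k ∈ Finset.range (n + 1), q ^ ((k : ℝ) * ((k : ℝ) + 1) / 2) * (-b) ^ k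
          / (qPoch q (q * c) k * qPoch q q k * qPoch q q (n - k)) := by
  refine Finset.sum_congr rfl fun n _ => ?_
  rw [confCoeff, coeff_phi11Series_mul_qExpSeries]
  ring

lemma qPoch_div_qPoch_succ_mul {q A b : ℝ} {n : ℕ} (h : b * q ^ (n + 1) = 1 → A * q ^ n = 1) :
    qPoch q A (n + 1) / qPoch q (q * b) (n + 1) * (1 - b * q ^ (n + 1))
      = qPoch q A n / qPoch q (q * b) n * (1 - A * q ^ n) := by
  have hb : b * q ^ (n + 1) = q * b * q ^ n := by ring
  rw [hb] at h ⊢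
  rw [qPoch_succ, qPoch_succ, mul_div_mul_comm, mul_assoc, div_mul_cancel_of_imp]
  simpa only [sub_eq_zero, eq_comm (a := (1 : ℝ))] using h

lemma confOpDown_succ_mul_confCoeff {q A b c : ℝ} (hq : q ≠ 0) {n : ℕ}
    (h : b * q ^ (n + 1) = 1 → A * q ^ n = 1) :
    confOpDown q b c (n + 1) * confCoeff q A b c (n + 1)
      = -(qPoch q A n / qPoch q (q * b) n * (1 - A * q ^ n) / q ^ n
        * ((1 - q ^ (n + 1)) * (1 - c * q ^ (n + 1))
          * coeff (n + 1) (phi11Series q b c * qExpSeries q))) := by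
  have hqn : q ^ n ≠ 0 := pow_ne_zero n hq
  rw [← qPoch_div_qPoch_succ_mul h, confOpDown, confCoeff, pow_succ]
  field_simp

/-- The parameters for which the series terminates at `n = N`, i.e. `A = q ^ (-N)`, and no
denominator occurring up to that point vanishes. -/
structure ConfTerminating (q A b c : ℝ) (N : ℕ) : Prop where
  ne_zero : q ≠ 0
  pow_ne_one : ∀ n : ℕ, q ^ (n + 1) ≠ 1
  A_mul_pow_eq_one : A * q ^ N = 1
  b_mul_pow_ne_one : ∀ n < N, b * q ^ (n + 1) ≠ 1
  c_mul_pow_ne_one : ∀ n < N, c * q ^ (n + 1) ≠ 1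

namespace ConfTerminating

variable {q A b c : ℝ} {N : ℕ}

lemma confOpDown_succ_mul_confCoeff_eq (h : ConfTerminating q A b c N) {n : ℕ} (hn : n ≤ N) :
    confOpDown q b c (n + 1) * confCoeff q A b c (n + 1)
      = -(qPoch q A n / qPoch q (q * b) n * (1 - A * q ^ n) / q ^ n
        * ((1 + q - (1 + b + c) * q ^ (n + 1)) * coeff n (phi11Series q b c * qExpSeries q)
          - q * (1 - b * q ^ n) * coeff n (X * (phi11Series q b c * qExpSeries q)))) := by
  rcases hn.eq_or_lt with rfl | hn
  · rw [confOpDown_succ_mul_confCoeff h.ne_zero fun _ => h.A_mul_pow_eq_one, h.A_mul_pow_eq_one]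
    ring
  · rw [confOpDown_succ_mul_confCoeff h.ne_zero fun hb => absurd hb (h.b_mul_pow_ne_one n hn),
      coeff_phi11Series_mul_qExpSeries_recurrence h.pow_ne_one h.c_mul_pow_ne_one hn]

lemma confCoeff_recurrence_zero (h : ConfTerminating q A b c N) :
    confOpDiag q A b c 0 * confCoeff q A b c 0 + confOpDown q b c 1 * confCoeff q A b c 1 = 0 := by
  rw [h.confOpDown_succ_mul_confCoeff_eq N.zero_le, coeff_zero_X_mul, confOpDiag, confCoeff]
  ring

lemma confCoeff_recurrence_succ (h : ConfTerminating q A b c N) {n : ℕ} (hn : n < N) :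
    confOpUp q A n * confCoeff q A b c n + confOpDiag q A b c (n + 1) * confCoeff q A b c (n + 1)
      + confOpDown q b c (n + 2) * confCoeff q A b c (n + 2) = 0 := by
  have hq : q ≠ 0 := h.ne_zero
  have hqn : q ^ n ≠ 0 := pow_ne_zero n hq
  have hw := qPoch_div_qPoch_succ_mul (A := A) fun hb => absurd hb (h.b_mul_pow_ne_one n hn)
  rw [h.confOpDown_succ_mul_confCoeff_eq hn, coeff_succ_X_mul, confOpUp, confOpDiag, confCoeff,
    confCoeff]
  generalize qPoch q A (n + 1) / qPoch q (q * b) (n + 1) = w' at *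
  generalize qPoch q A n / qPoch q (q * b) n = w at *
  simp only [pow_succ] at hw ⊢
  field_simp
  linear_combination (1 - A * q ^ n * q) * q * coeff n (phi11Series q b c * qExpSeries q) * hw

theorem confOp_confSum_eq_zero (h : ConfTerminating q A b c N) (y : ℝ) :
    confOp q A b c (confSum q A b c N) y = 0 := by
  have hdown : confOpDown q b c (N + 1) * confCoeff q A b c (N + 1) = 0 := by
    rw [confOpDown_succ_mul_confCoeff h.ne_zero fun _ => h.A_mul_pow_eq_one, h.A_mul_pow_eq_one]
    ring
  have hup : confOpUp q A N = 0 := by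
    rw [confOpUp, h.A_mul_pow_eq_one]
    ring
  calc confOp q A b c (confSum q A b c N) y
      = ∑ n ∈ Finset.range (N + 1), confCoeff q A b c n
          * confOp q A b c (fun z => qPoch q z n) y := confOp_sum ..
    _ = y * ∑ n ∈ Finset.range (N + 1), confCoeff q A b c n
          * (confOpUp q A n * qPoch q y (n + 1) + confOpDiag q A b c n * qPoch q y n
            + confOpDown q b c n * qPoch q y (n - 1)) := by
        simp only [confOp_qPoch h.ne_zero, Finset.mul_sum, mul_left_comm y]
    _ = 0 := by
        rw [sum_range_succ_tridiagonal (qPoch q y) (by simp [confOpDown])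
          h.confCoeff_recurrence_zero fun n hn => h.confCoeff_recurrence_succ hn, hup, hdown]
        ring

end ConfTerminating

end Solution

section Reduction

/-- The equation with every real power written as a monomial: `s`, `H`, `L₁`, `L₂`, `a`, `l` stand
for `q` to the powers `1/2`, `h₁`, `l₁`, `l₂`, `α₁`, `lam`. -/
lemma mul_confOp_eq_of_sq_eq {q s H L₁ L₂ a l t₁ t₂ x : ℝ} (hs : s ^ 2 = q) (hs0 : s ≠ 0)
    (hH : H ≠ 0) (hL₁ : L₁ ≠ 0) (hL₂ : L₂ ≠ 0) (ha : a ≠ 0) (ht₁ : t₁ ≠ 0) (ht₂ : t₂ ≠ 0)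
    (hx : x ≠ 0) (f : ℝ → ℝ) :
    x ^ 2 / (a * (q ^ 2 * (H / L₂ * t₁ / t₂) * (H / L₁)))
        * confOp q (l * a) (H / L₂ * t₁ / t₂) (H / L₁) f (H * s * t₁ / x)
      = (x - L₁ / s * t₁) * (x - L₂ / s * t₂) * (a⁻¹ * f (H * s * t₁ / (q * x)))
        - H⁻¹ * L₁ * L₂ * (l * l) / s * t₂ * (x - H * s * t₁) * (a * f (H * s * t₁ / (x / q)))
        - (a⁻¹ * x ^ 2 - L₁ * L₂ * l / s * (L₂⁻¹ * t₁ + (H⁻¹ + L₁⁻¹) * t₂) * x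
            + L₁ * L₂ * l * (1 + q⁻¹) * t₁ * t₂) * f (H * s * t₁ / x) := by
  have hdiv : H * s * t₁ / (q * x) = H * s * t₁ / x / q := by
    rw [div_div, mul_comm q]
  have hmul : H * s * t₁ / (x / q) = q * (H * s * t₁ / x) := by
    rw [div_div_eq_mul_div, mul_comm, mul_div_assoc]
  rw [hdiv, hmul, confOp]
  generalize f (H * s * t₁ / x / q) = f₁, f (q * (H * s * t₁ / x)) = f₂, f (H * s * t₁ / x) = f₃
  subst hs
  field_simp
  ring

theorem confEq21_of_confOp_eq_zero {q t₁ t₂ : ℝ} (hq : 0 < q) (ht₁ : t₁ ≠ 0) (ht₂ : t₂ ≠ 0)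
    (h₁ l₁ l₂ α₁ lam : ℝ) {f : ℝ → ℝ}
    (hf : ∀ y, confOp q (q ^ (lam + α₁)) (q ^ (h₁ - l₂) * t₁ / t₂) (q ^ (h₁ - l₁)) f y = 0) :
    confEq21 q h₁ l₁ l₂ α₁ lam t₁ t₂
      (fun x => x ^ (-α₁) * f (q ^ (h₁ + 1/2) * t₁ / x)) := by
  intro x hx
  have hsq : (q ^ (1/2 : ℝ)) ^ 2 = q := by
    rw [← Real.sqrt_eq_rpow, Real.sq_sqrt hq.le]
  have hpow (r : ℝ) : q ^ r ≠ 0 := (Real.rpow_pos_of_pos hq r).ne'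
  have key := mul_confOp_eq_of_sq_eq (l := q ^ lam) hsq (hpow _) (hpow h₁) (hpow l₁) (hpow l₂)
    (hpow α₁) ht₁ ht₂ hx.ne' f
  simp only [← Real.rpow_add hq, ← Real.rpow_sub hq, hf, mul_zero] at key
  simp only [Real.mul_rpow hq.le hx.le, Real.div_rpow hx.le hq.le]
  simp only [Real.rpow_add hq, Real.rpow_sub hq, Real.rpow_neg hq.le, two_mul, div_inv_eq_mul]
    at key ⊢
  linear_combination -x ^ (-α₁) * key

lemma confTerminating_rpow {q h₁ l₁ l₂ α₁ lam t₁ t₂ : ℝ} {N : ℕ} (hq : 0 < q) (hq1 : q ≠ 1)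
    (hN : lam + α₁ = -(N : ℝ))
    (hb : ∀ n : ℕ, 1 ≤ n → n ≤ N → q ^ (h₁ - l₂ + (n : ℝ)) * t₁ / t₂ ≠ 1)
    (hc : ∀ k : ℕ, 1 ≤ k → k ≤ N → q ^ (h₁ - l₁ + (k : ℝ)) ≠ 1) :
    ConfTerminating q (q ^ (lam + α₁)) (q ^ (h₁ - l₂) * t₁ / t₂) (q ^ (h₁ - l₁)) N where
  ne_zero := hq.ne'
  pow_ne_one := fun n => mt (pow_eq_one_iff_of_nonneg hq.le n.succ_ne_zero).1 hq1
  A_mul_pow_eq_one := by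
    rw [← Real.rpow_add_natCast hq.ne', hN, neg_add_cancel, Real.rpow_zero]
  b_mul_pow_ne_one := fun n hn => by
    simpa only [Real.rpow_add_natCast hq.ne', mul_right_comm, div_mul_eq_mul_div]
      using hb (n + 1) n.succ_pos hn
  c_mul_pow_ne_one := fun n hn => by
    simpa only [Real.rpow_add_natCast hq.ne'] using hc (n + 1) n.succ_pos hn

end Reduction

theorem stmt13 (q h₁ l₁ l₂ α₁ lam t₁ t₂ : ℝ) (N : ℕ)
    (hq : 0 < q) (hq1 : q ≠ 1) (ht₁ : t₁ ≠ 0) (ht₂ : t₂ ≠ 0)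
    (hN : 0 < N) (hNlam : lam + α₁ = -(N : ℝ))
    (hden₁ : ∀ n : ℕ, 1 ≤ n → n ≤ N → q ^ (h₁ - l₂ + (n : ℝ)) * t₁ / t₂ ≠ 1)
    (hden₂ : ∀ k : ℕ, 1 ≤ k → k ≤ N → q ^ (h₁ - l₁ + (k : ℝ)) ≠ 1) :
    confEq21 q h₁ l₁ l₂ α₁ lam t₁ t₂ (fun x =>
      x ^ (-α₁) * ∑ n ∈ Finset.range (N + 1),
        qPoch q (q ^ (h₁ + 1/2) * t₁ / x) n *
            (qPoch q (q ^ (lam + α₁)) n / qPoch q (q ^ (h₁ - l₂ + 1) * t₁ / t₂) n) * q ^ n *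
          ∑ k ∈ Finset.range (n + 1),
            q ^ ((k : ℝ) * ((k : ℝ) + 1) / 2) * (-(q ^ (h₁ - l₂) * t₁ / t₂)) ^ k /
              (qPoch q (q ^ (h₁ - l₁ + 1)) k * qPoch q q k * qPoch q q (n - k))) := by
  have hpar := confTerminating_rpow hq hq1 hNlam hden₁ hden₂
  have hqb : q ^ (h₁ - l₂ + 1) * t₁ / t₂ = q * (q ^ (h₁ - l₂) * t₁ / t₂) := by
    rw [Real.rpow_add_one hq.ne']
    ring
  have hqc : q ^ (h₁ - l₁ + 1) = q * q ^ (h₁ - l₁) := by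
    rw [Real.rpow_add_one hq.ne', mul_comm]
  simpa only [confSum_eq_sum_range, hqb, hqc] using
    confEq21_of_confOp_eq_zero hq ht₁ ht₂ h₁ l₁ l₂ α₁ lam hpar.confOp_confSum_eq_zero
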